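/- Let d ≥ 2 and let H be the joint distribution function of a probability measure μ on ℝ^d with marginal distribution functions F₁,…,F_d. Then there exists a d-copula C such that H(x₁,…,x_d) = C(F₁(x₁),…,F_d(x_d)) for all (x₁,…,x_d) ∈ ℝ^d. Conversely, if C is a d-copula and F₁,…,F_d are distribution functions of probability measures on ℝ, then there exists a probability measure on ℝ^d whose joint distribution function is H(x₁,…,x_d) = C(F₁(x₁),…,F_d(x_d)) and whose marginal distribution functions are F₁,…,F_d. -/

import Mathlib

/-!
Both halves rest on one-dimensional transformations between a law on `ℝ` and the uniform law.

*From a measure to a copula.* Let `X` have law `μ`, and let `V` be uniform on `[0, 1]` and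
independent of `X`. With `F i` the `i`-th marginal distribution function, the distributional
transform `U i = F i (X i -) + V * (F i (X i) - F i (X i -))` is uniform
(`distTransform_uniform`), so the joint distribution function `C` of `U` is a copula
(`isCopula_of_uniform`). Since `{X i ≤ x i}` is almost surely contained in `{U i ≤ F i (x i)}` and
the two events have the same probability, they agree almost surely; intersecting over `i` gives
`H x = C (F x)`.

*From a copula to a measure.* On a finite grid, the `C`-volumes of the cells are nonnegative and
sum telescopically to the values of `C` at the grid points (`exists_grid_measure`). The telescoping
in `d` variables is distributivity in a commutative ring: `C` extends to an additive functional
with `e₁(x₁) ⋯ e_d(x_d) ↦ C x`, which sends `∏ i, (e i (b i) - e i (a i))` to the `C`-volume of the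
box (`functional_prod_sub`). The grid `0 ≤ x i ≤ y i ≤ 1` yields that `C` is monotone and Lipschitz
(`IsCopula.mono_lip`). By Prokhorov's theorem the discrete measures on the grids of mesh
`1 / (n + 1)` have a weak cluster point, and the portmanteau inequalities together with the
continuity of `C` identify its distribution function as `C` (`IsCopula.exists_measure`). Pushing
it forward by the quantile functions, for which `quantile u ≤ x ↔ u ≤ F x`, gives the required
measure.
-/

open MeasureTheory ENNReal Set

/-- A `d`-copula: grounded, `d`-increasing, with uniform margins. The `d`-increasing
condition is stated as nonnegativity of the alternating sum over the vertices of the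
box `∏ i {a i, b i}`, the vertex with `v i = b i` exactly for `i ∈ s` carrying the
sign `(-1)^{#{i : v i = a i}} = (-1)^{d - #s}`. -/
def IsCopula (d : ℕ) (C : (Fin d → ℝ) → ℝ) : Prop :=
  (∀ u : Fin d → ℝ, (∀ i, u i ∈ Icc (0:ℝ) 1) → (∃ i, u i = 0) → C u = 0) ∧
  (∀ a b : Fin d → ℝ, (∀ i, a i ∈ Icc (0:ℝ) 1) → (∀ i, b i ∈ Icc (0:ℝ) 1) →
    (∀ i, a i ≤ b i) →
    0 ≤ ∑ s : Finset (Fin d),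
          (-1 : ℝ) ^ (d - s.card) * C (fun i => if i ∈ s then b i else a i)) ∧
  (∀ i : Fin d, ∀ t ∈ Icc (0:ℝ) 1, C (fun j => if j = i then t else 1) = t)

/-! ### Alternating sums over the vertices of a box -/

/-- The `C`-volume of the box `∏ i, [a i, b i]`: the alternating sum in `IsCopula`. -/
noncomputable def boxVol {d : ℕ} (C : (Fin d → ℝ) → ℝ) (a b : Fin d → ℝ) : ℝ :=
  ∑ s : Finset (Fin d), (-1 : ℝ) ^ (d - s.card) * C (fun i => if i ∈ s then b i else a i)

lemma prod_sub_expand {d : ℕ} {R : Type*} [CommRing R] (f g : Fin d → R) :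
    ∏ i, (f i - g i) =
      ∑ s : Finset (Fin d), (-1 : R) ^ (d - s.card) * ∏ i, (if i ∈ s then f i else g i) := by
  classical
  simp only [sub_eq_add_neg]
  rw [Finset.prod_add, Finset.powerset_univ]
  refine Finset.sum_congr rfl fun s _ => ?_
  rw [Finset.prod_neg, Finset.prod_ite, ← Finset.compl_eq_univ_sdiff, Finset.card_compl,
    Fintype.card_fin, mul_left_comm]
  congr 3
  · ext; simp
  · ext; simp

/-- Every function `C` on `ℝ^d` is the restriction of an additive functional to the pure
products `∏ i, e i (x i)` of a commutative ring. It turns the `C`-volume of a box into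
the image of `∏ i, (e i (b i) - e i (a i))`, so that additivity of volumes becomes
distributivity. -/
lemma exists_functional {d : ℕ} (C : (Fin d → ℝ) → ℝ) :
    ∃ (R : Type) (_ : CommRing R) (e : Fin d → ℝ → R) (L : R →+ ℝ),
      ∀ x : Fin d → ℝ, L (∏ i, e i (x i)) = C x := by
  classical
  let L : AddMonoidAlgebra ℝ (Fin d → ℝ) →ₗ[ℝ] ℝ :=
    (Finsupp.linearCombination ℝ C).comp (AddMonoidAlgebra.coeffLinearEquiv ℝ).toLinearMap
  refine ⟨AddMonoidAlgebra ℝ (Fin d → ℝ), inferInstance,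
    fun i x => AddMonoidAlgebra.of ℝ (Fin d → ℝ) (Multiplicative.ofAdd (Pi.single i x)),
    L.toAddMonoidHom, fun x => ?_⟩
  rw [← map_prod, ← ofAdd_sum, Finset.univ_sum_single]
  simp [L]

lemma functional_prod_sub {d : ℕ} {R : Type} [CommRing R] {e : Fin d → ℝ → R} {L : R →+ ℝ}
    {C : (Fin d → ℝ) → ℝ} (hL : ∀ x : Fin d → ℝ, L (∏ i, e i (x i)) = C x)
    (a b : Fin d → ℝ) :
    L (∏ i, (e i (b i) - e i (a i))) = boxVol C a b := by
  rw [prod_sub_expand, map_sum, boxVol]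
  refine Finset.sum_congr rfl fun s _ => ?_
  have h : ∏ i, (if i ∈ s then e i (b i) else e i (a i))
      = ∏ i, e i (if i ∈ s then b i else a i) :=
    Finset.prod_congr rfl fun i _ => by split_ifs <;> rfl
  rw [h]
  rcases Nat.even_or_odd (d - s.card) with h2 | h2
  · rw [h2.neg_one_pow, h2.neg_one_pow, one_mul, one_mul, hL]
  · rw [h2.neg_one_pow, h2.neg_one_pow, neg_one_mul, neg_one_mul, map_neg, hL]

/-- Summing the `C`-volumes of the cells of a grid below the grid point `j` gives the value
of a grounded `C` at that point. -/
lemma sum_boxVol_grid {d : ℕ} {C : (Fin d → ℝ) → ℝ} (hC : IsCopula d C)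
    (g : Fin d → ℕ → ℝ) (hg0 : ∀ i, g i 0 = 0) (hg : ∀ i k, g i k ∈ Icc (0:ℝ) 1)
    (j : Fin d → ℕ) :
    ∑ k ∈ Fintype.piFinset (fun i => Finset.range (j i)),
      boxVol C (fun i => g i (k i)) (fun i => g i (k i + 1)) = C (fun i => g i (j i)) := by
  classical
  obtain ⟨R, _, e, L, hL⟩ := exists_functional C
  have h1 : ∀ k : Fin d → ℕ, boxVol C (fun i => g i (k i)) (fun i => g i (k i + 1))
      = L (∏ i, (e i (g i (k i + 1)) - e i (g i (k i)))) :=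
    fun k => (functional_prod_sub hL _ _).symm
  simp only [h1]
  rw [← map_sum, ← Finset.prod_univ_sum (fun i => Finset.range (j i))
    (fun i m => e i (g i (m + 1)) - e i (g i m))]
  have h2 : ∀ i, ∑ m ∈ Finset.range (j i), (e i (g i (m + 1)) - e i (g i m))
      = e i (g i (j i)) - e i (g i 0) :=
    fun i => Finset.sum_range_sub (fun m => e i (g i m)) (j i)
  simp only [h2]
  rw [functional_prod_sub hL (fun i => g i 0) (fun i => g i (j i)), boxVol,
    Finset.sum_eq_single Finset.univ]
  · simp
  · intro s _ hs
    obtain ⟨i, hi⟩ : ∃ i, i ∉ s := by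
      by_contra! h
      exact hs (Finset.eq_univ_iff_forall.2 h)
    rw [hC.1 _ (fun i => by split_ifs <;> exact hg _ _) ⟨i, by simp [hi, hg0]⟩, mul_zero]
  · simp

/-! ### Discrete approximations of a copula -/

lemma IsCopula.one {d : ℕ} (hd : 0 < d) {C : (Fin d → ℝ) → ℝ} (hC : IsCopula d C) :
    C (fun _ => 1) = 1 := by
  simpa using hC.2.2 ⟨0, hd⟩ 1 (by simp)

/-- The law on grid indices that gives each cell of a finite grid its `C`-volume. -/
lemma exists_grid_measure {d : ℕ} (hd : 0 < d) {C : (Fin d → ℝ) → ℝ} (hC : IsCopula d C)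
    (g : Fin d → ℕ → ℝ) (hg0 : ∀ i, g i 0 = 0) (hmono : ∀ i, Monotone (g i))
    (N : ℕ) (hgN : ∀ i k, N ≤ k → g i k = 1) :
    ∃ m : Measure (Fin d → ℕ), IsProbabilityMeasure m ∧
      (∀ᵐ k ∂m, ∀ i, k i < N) ∧
      (∀ j : Fin d → ℕ, (∀ i, j i ≤ N) →
        m.real {k | ∀ i, k i < j i} = C (fun i => g i (j i))) ∧
      (∀ i : Fin d, ∀ j ≤ N, m.real {k | k i < j} = g i j) := by
  classical
  have hg : ∀ i k, g i k ∈ Icc (0:ℝ) 1 := fun i k =>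
    ⟨hg0 i ▸ hmono i (Nat.zero_le k),
      (hmono i (le_max_left k N)).trans_eq (hgN i _ (le_max_right k N))⟩
  set w : (Fin d → ℕ) → ℝ := fun k => boxVol C (fun i => g i (k i)) (fun i => g i (k i + 1))
    with hw
  have hw0 : ∀ k, 0 ≤ w k := fun k =>
    hC.2.1 _ _ (fun i => hg _ _) (fun i => hg _ _) (fun i => hmono i (Nat.le_succ _))
  set P : Finset (Fin d → ℕ) := Fintype.piFinset (fun _ => Finset.range N) with hP
  set m : Measure (Fin d → ℕ) := ∑ k ∈ P, ENNReal.ofReal (w k) • Measure.dirac k with hm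
  have hmeas : ∀ s : Set (Fin d → ℕ), MeasurableSet s := fun s => s.to_countable.measurableSet
  have hval : ∀ s : Set (Fin d → ℕ), m s = ENNReal.ofReal (∑ k ∈ P with k ∈ s, w k) := by
    intro s
    rw [ENNReal.ofReal_sum_of_nonneg (fun k _ => hw0 k), Finset.sum_filter, hm,
      Measure.finsetSum_apply]
    refine Finset.sum_congr rfl fun k _ => ?_
    by_cases hk : k ∈ s <;> simp [Measure.dirac_apply' _ (hmeas s), hk]
  have hcdf : ∀ j : Fin d → ℕ, (∀ i, j i ≤ N) →
      m.real {k | ∀ i, k i < j i} = C (fun i => g i (j i)) := by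
    intro j hj
    rw [measureReal_def, hval, ENNReal.toReal_ofReal (Finset.sum_nonneg fun k _ => hw0 k),
      ← sum_boxVol_grid hC g hg0 hg j]
    refine Finset.sum_congr ?_ fun _ _ => rfl
    ext k
    simp only [hP, Finset.mem_filter, Fintype.mem_piFinset, Finset.mem_range, mem_ofPred_eq]
    exact ⟨fun h => h.2, fun h => ⟨fun i => (h i).trans_le (hj i), h⟩⟩
  have hN1 : m.real {k | ∀ i, k i < N} = 1 := by
    rw [hcdf (fun _ => N) (fun _ => le_rfl)]
    simpa only [hgN _ N le_rfl] using hC.one hd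
  have hN2 : m {k | ∀ i, k i < N} = 1 := by
    have := hN1
    rw [measureReal_def, ENNReal.toReal_eq_one_iff] at this
    exact this
  have huniv : m univ = 1 := by
    rw [← hN2, hval, hval]
    congr 2
    ext k
    simp [hP]
  have : IsProbabilityMeasure m := ⟨huniv⟩
  have hae : ∀ᵐ k ∂m, ∀ i, k i < N := by
    rw [← prob_compl_eq_zero_iff (hmeas _)] at hN2
    exact hN2
  refine ⟨m, inferInstance, hae, hcdf, fun i j hj => ?_⟩
  have h1 : m.real {k | k i < j} = m.real {k | ∀ l, k l < (if l = i then j else N)} := by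
    refine measureReal_congr (Filter.eventuallyEq_set.2 ?_)
    filter_upwards [hae] with k hk
    refine ⟨fun h l => ?_, fun h => ?_⟩
    · split_ifs with hl
      · exact hl ▸ h
      · exact hk l
    · simpa using h i
  rw [h1, hcdf _ (fun l => by split_ifs <;> simp [hj])]
  have h2 : (fun l => g l (if l = i then j else N)) = fun l => if l = i then g i j else 1 := by
    ext l
    split_ifs with hl
    · rw [hl]
    · exact hgN l N le_rfl
  rw [h2, hC.2.2 i _ (hg i j)]

lemma IsCopula.mono_lip {d : ℕ} (hd : 0 < d) {C : (Fin d → ℝ) → ℝ} (hC : IsCopula d C)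
    {x y : Fin d → ℝ} (hx : ∀ i, 0 ≤ x i) (hxy : ∀ i, x i ≤ y i) (hy : ∀ i, y i ≤ 1) :
    C x ≤ C y ∧ C y ≤ C x + ∑ i, (y i - x i) := by
  -- the grid `0 ≤ x i ≤ y i ≤ 1` in each coordinate
  set g : Fin d → ℕ → ℝ := fun i k =>
    if k = 0 then 0 else if k = 1 then x i else if k = 2 then y i else 1 with hg
  have hmono : ∀ i, Monotone (g i) := fun i => monotone_nat_of_le_succ fun k => by
    have := hx i; have := hxy i; have := hy i
    rcases k with _ | _ | _ | k <;> simp [hg] <;> linarith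
  obtain ⟨m, hm, -, hcdf, hmarg⟩ := exists_grid_measure hd hC g (by simp [hg]) hmono 3
    (fun i k hk => by simp [hg, show k ≠ 0 by omega, show k ≠ 1 by omega, show k ≠ 2 by omega])
  have h1 : m.real {k | ∀ i, k i < 1} = C x := by
    simpa [hg] using hcdf (fun _ => 1) (by simp)
  have h2 : m.real {k | ∀ i, k i < 2} = C y := by
    simpa [hg] using hcdf (fun _ => 2) (by simp)
  have hmeas : ∀ s : Set (Fin d → ℕ), MeasurableSet s := fun s => s.to_countable.measurableSet
  refine ⟨?_, ?_⟩
  · rw [← h1, ← h2]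
    exact measureReal_mono (fun k hk i => (hk i).trans (by norm_num))
  · have h3 : ∀ i, m.real ({k | k i < 2} \ {k | k i < 1}) = y i - x i := by
      intro i
      have hsub : {k : Fin d → ℕ | k i < 1} ⊆ {k | k i < 2} :=
        fun k hk => lt_trans (show k i < 1 from hk) Nat.one_lt_two
      rw [measureReal_sdiff hsub (hmeas _),
        hmarg i 2 (by norm_num), hmarg i 1 (by norm_num)]
      simp [hg]
    rw [← h1, ← h2]
    simp only [← h3]
    calc m.real {k | ∀ i, k i < 2}
        ≤ m.real ({k | ∀ i, k i < 1} ∪ ⋃ i, ({k | k i < 2} \ {k | k i < 1})) := by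
          refine measureReal_mono (fun k hk => ?_)
          by_cases h : ∀ i, k i < 1
          · exact Or.inl h
          · push Not at h
            obtain ⟨i, hi⟩ := h
            exact Or.inr (mem_iUnion.2 ⟨i, hk i, not_lt.2 hi⟩)
      _ ≤ _ := (measureReal_union_le _ _).trans (by
          gcongr
          exact measureReal_iUnion_fintype_le _)

/-! ### The probability measure of a copula -/

/-- On the uniform grid of mesh `1 / (n + 1)`, the law that places the `C`-volume of each cell
at its upper corner has a distribution function within `d / (n + 1)` of `C`. -/
lemma exists_approx_measure {d : ℕ} (hd : 0 < d) {C : (Fin d → ℝ) → ℝ} (hC : IsCopula d C)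
    (n : ℕ) :
    ∃ ν : ProbabilityMeasure (Fin d → ℝ), (ν : Measure (Fin d → ℝ)) (Icc 0 1)ᶜ = 0 ∧
      ∀ x : Fin d → ℝ, (∀ i, x i ∈ Icc (0:ℝ) 1) →
        (ν : Measure (Fin d → ℝ)).real {y | ∀ i, y i ≤ x i} ≤ C x ∧
        C x ≤ (ν : Measure (Fin d → ℝ)).real {y | ∀ i, y i ≤ x i} + d * (1 / ((n:ℝ) + 1)) := by
  have hn : (0:ℝ) < (n:ℝ) + 1 := by positivity
  set g : Fin d → ℕ → ℝ := fun _ k => min ((k:ℝ) / ((n:ℝ) + 1)) 1 with hg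
  have hmono : ∀ i, Monotone (g i) := fun i a b hab => by
    simp only [hg]
    gcongr
  have hgle : ∀ i k, k ≤ n + 1 → g i k = (k:ℝ) / ((n:ℝ) + 1) := fun i k hk => by
    simp only [hg]
    rw [min_eq_left]
    rw [div_le_one hn]
    exact_mod_cast hk
  obtain ⟨m, hm, hae, hcdf, -⟩ := exists_grid_measure hd hC g (by simp [hg]) hmono (n + 1)
    (fun i k hk => by
      simp only [hg]
      rw [min_eq_right]
      rw [le_div_iff₀ hn, one_mul]
      exact_mod_cast hk)
  set T : (Fin d → ℕ) → (Fin d → ℝ) := fun k i => ((k i : ℝ) + 1) / ((n:ℝ) + 1) with hT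
  have hTm : Measurable T := by fun_prop
  have hprob : IsProbabilityMeasure (m.map T) := Measure.isProbabilityMeasure_map hTm.aemeasurable
  refine ⟨⟨m.map T, hprob⟩, ?_, fun x hx => ?_⟩
  · have : ∀ᵐ y ∂(m.map T), y ∈ Icc (0 : Fin d → ℝ) 1 := by
      refine (ae_map_iff hTm.aemeasurable measurableSet_Icc).2 ?_
      filter_upwards [hae] with k hk
      refine ⟨fun i => ?_, fun i => ?_⟩
      · simp only [hT, Pi.zero_apply]
        positivity
      · simp only [hT, Pi.one_apply]
        rw [div_le_one hn]
        exact_mod_cast hk i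
    exact this
  · set j : Fin d → ℕ := fun i => ⌊x i * ((n:ℝ) + 1)⌋₊ with hj
    have hj0 : ∀ i, 0 ≤ x i * ((n:ℝ) + 1) := fun i => mul_nonneg (hx i).1 hn.le
    have hjN : ∀ i, j i ≤ n + 1 := fun i => by
      refine Nat.floor_le_of_le ?_
      push_cast
      exact mul_le_of_le_one_left hn.le (hx i).2
    have hset : T ⁻¹' {y | ∀ i, y i ≤ x i} = {k | ∀ i, k i < j i} := by
      ext k
      refine forall_congr' fun i => ?_
      rw [← Nat.succ_le_iff, hj, Nat.le_floor_iff (hj0 i), hT, div_le_iff₀ hn]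
      push_cast
      rfl
    have hms : MeasurableSet {y : Fin d → ℝ | ∀ i, y i ≤ x i} := measurableSet_Iic (a := x)
    have hval : (m.map T).real {y | ∀ i, y i ≤ x i} = C (fun i => g i (j i)) := by
      rw [map_measureReal_apply hTm hms, hset, hcdf j hjN]
    have h1 : ∀ i, g i (j i) ≤ x i := fun i => by
      rw [hgle i _ (hjN i), div_le_iff₀ hn]
      exact Nat.floor_le (hj0 i)
    have h2 : ∀ i, x i - g i (j i) ≤ 1 / ((n:ℝ) + 1) := fun i => by
      rw [hgle i _ (hjN i), sub_le_iff_le_add, ← add_div, le_div_iff₀ hn, add_comm (1:ℝ)]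
      exact (Nat.lt_floor_add_one _).le
    have h0 : ∀ i, 0 ≤ g i (j i) := fun i => by
      simp only [hg]
      positivity
    obtain ⟨hA, hB⟩ := hC.mono_lip hd h0 h1 (fun i => (hx i).2)
    simp only [ProbabilityMeasure.coe_mk]
    rw [hval]
    refine ⟨hA, hB.trans ?_⟩
    gcongr
    refine (Finset.sum_le_sum fun i _ => h2 i).trans_eq ?_
    simp

/-- A weak limit of the grid approximations has `C` as its distribution function. -/
lemma IsCopula.exists_measure {d : ℕ} (hd : 0 < d) {C : (Fin d → ℝ) → ℝ} (hC : IsCopula d C) :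
    ∃ ν : Measure (Fin d → ℝ), IsProbabilityMeasure ν ∧
      ∀ x : Fin d → ℝ, (∀ i, x i ∈ Icc (0:ℝ) 1) → ν.real {y | ∀ i, y i ≤ x i} = C x := by
  choose ν hK hν using exists_approx_measure hd hC
  have hcomp := isCompact_setOfPred_probabilityMeasure_mass_eq_compl_isCompact_le
    (E := Fin d → ℝ) (u := fun _ => 0) (K := fun _ => Icc 0 1) tendsto_const_nhds
    (fun _ => isCompact_Icc) (Or.inr monotone_const)
  obtain ⟨ρ, -, hρ⟩ := hcomp.ultrafilter_le_nhds ((Filter.hyperfilter ℕ).map ν) (by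
    simp only [Ultrafilter.coe_map, Filter.le_principal_iff, Filter.mem_map]
    refine Filter.Eventually.of_forall fun n _ => ?_
    have := hK n
    rw [← ProbabilityMeasure.ennreal_coeFn_eq_coeFn_toMeasure] at this
    exact le_of_eq (by exact_mod_cast this))
  have hlim : Filter.Tendsto ν (Filter.hyperfilter ℕ) (nhds ρ) := hρ
  have hsmall : Filter.Tendsto (fun n : ℕ => (d:ℝ) * (1 / ((n:ℝ) + 1)))
      (Filter.hyperfilter ℕ) (nhds 0) := by
    have := (tendsto_one_div_add_atTop_nhds_zero_nat (𝕜 := ℝ)).const_mul (d:ℝ)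
    rw [mul_zero] at this
    exact this.mono_left Nat.hyperfilter_le_atTop
  refine ⟨ρ, inferInstance, fun x hx => le_antisymm ?_ ?_⟩
  · refine le_of_forall_pos_le_add fun ε hε => ?_
    set δ := ε / d with hδ
    have hd' : (0:ℝ) < d := by exact_mod_cast hd
    have hδ0 : 0 < δ := by positivity
    set z : Fin d → ℝ := fun i => min (x i + δ) 1 with hz
    have hxz : ∀ i, x i ≤ z i := fun i => le_min (by linarith) (hx i).2
    have hz01 : ∀ i, z i ∈ Icc (0:ℝ) 1 := fun i => ⟨(hx i).1.trans (hxz i), min_le_right _ _⟩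
    set G : Set (Fin d → ℝ) := Set.pi univ fun i => Iio (x i + δ) with hG
    have hGo : IsOpen G := isOpen_set_pi finite_univ fun i _ => isOpen_Iio
    have h1 : (ρ : Measure (Fin d → ℝ)) G ≤ ENNReal.ofReal (C z) := by
      refine (ProbabilityMeasure.le_liminf_measure_open_of_tendsto hlim hGo).trans ?_
      refine Filter.liminf_le_of_le (by isBoundedDefault) fun b hb => ?_
      obtain ⟨n, hn⟩ := hb.exists
      refine hn.trans ?_
      have h3 : (ν n : Measure (Fin d → ℝ)) G
          ≤ (ν n : Measure (Fin d → ℝ)) {y | ∀ i, y i ≤ z i} := by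
        refine measure_mono_ae ?_
        have h4 : ∀ᵐ y ∂(ν n : Measure (Fin d → ℝ)), y ∈ Icc (0 : Fin d → ℝ) 1 := hK n
        filter_upwards [h4] with y hy hyG i
        exact le_min (le_of_lt (hyG i (mem_univ i))) (hy.2 i)
      refine h3.trans ?_
      rw [← ofReal_measureReal]
      exact ENNReal.ofReal_le_ofReal (hν n z hz01).1
    have hCz : 0 ≤ C z := measureReal_nonneg.trans (hν 0 z hz01).1
    calc (ρ : Measure (Fin d → ℝ)).real {y | ∀ i, y i ≤ x i}
        ≤ (ρ : Measure (Fin d → ℝ)).real G :=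
          measureReal_mono fun y hy i _ => lt_of_le_of_lt (hy i) (by linarith)
      _ ≤ C z := ENNReal.toReal_le_of_le_ofReal hCz h1
      _ ≤ C x + ∑ i, (z i - x i) := (hC.mono_lip hd (fun i => (hx i).1) hxz fun i => (hz01 i).2).2
      _ ≤ C x + ∑ _i : Fin d, δ := by
          gcongr with i
          have := min_le_left (x i + δ) 1
          simp only [hz]
          linarith
      _ = C x + ε := by
          simp [hδ]
          field_simp
  · have hcl : IsClosed {y : Fin d → ℝ | ∀ i, y i ≤ x i} := isClosed_Iic (a := x)
    have h1 := ProbabilityMeasure.limsup_measure_closed_le_of_tendsto hlim hcl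
    refine le_of_forall_pos_le_add fun ε hε => ?_
    have h2 : ENNReal.ofReal (C x - ε) ≤ (ρ : Measure (Fin d → ℝ)) {y | ∀ i, y i ≤ x i} := by
      refine le_trans ?_ h1
      refine Filter.le_limsup_of_frequently_le (Filter.Eventually.frequently ?_)
        (by isBoundedDefault)
      filter_upwards [hsmall.eventually (gt_mem_nhds hε)] with n hn
      rw [← ofReal_measureReal]
      refine ENNReal.ofReal_le_ofReal ?_
      have := (hν n x hx).2
      linarith
    rw [ENNReal.ofReal_le_iff_le_toReal (measure_ne_top _ _)] at h2
    rw [measureReal_def]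
    linarith

lemma IsCopula.measure_margin {d : ℕ} {C : (Fin d → ℝ) → ℝ} (hC : IsCopula d C)
    {ν : Measure (Fin d → ℝ)} [IsProbabilityMeasure ν]
    (hν : ∀ x : Fin d → ℝ, (∀ i, x i ∈ Icc (0:ℝ) 1) → ν.real {y | ∀ i, y i ≤ x i} = C x)
    (i : Fin d) {t : ℝ} (ht : t ∈ Icc (0:ℝ) 1) : ν.real {y | y i ≤ t} = t := by
  have hms : MeasurableSet {y : Fin d → ℝ | ∀ i, y i ≤ 1} := measurableSet_Iic (a := 1)
  have h1 : ν.real {y : Fin d → ℝ | ∀ i, y i ≤ 1} = 1 := by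
    rw [hν (fun _ => 1) (by simp), hC.one (Fin.pos i)]
  have hae : ∀ᵐ y ∂ν, ∀ l, y l ≤ 1 := by
    rw [measureReal_def, ENNReal.toReal_eq_one_iff, ← prob_compl_eq_zero_iff hms] at h1
    exact h1
  refine Eq.trans ?_ ((hν _ fun l => ?_).trans (hC.2.2 i t ht))
  swap
  · split_ifs <;> simp [ht.1, ht.2]
  refine measureReal_congr (Filter.eventuallyEq_set.2 ?_)
  filter_upwards [hae] with y hy
  refine ⟨fun h l => ?_, fun h => ?_⟩
  · split_ifs with hl
    · exact hl ▸ h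
    · exact hy l
  · simpa using h i

/-! ### Quantiles -/

/-- The quantile function of a law on `ℝ`, given the arbitrary value `0` outside `(0, 1)`. -/
noncomputable def quantile (ρ : Measure ℝ) (u : ℝ) : ℝ :=
  open Classical in if u ∈ Ioo (0:ℝ) 1 then sInf {x | u ≤ ρ.real (Iic x)} else 0

lemma quantile_le_iff (ρ : Measure ℝ) [IsProbabilityMeasure ρ] {u : ℝ} (hu : u ∈ Ioo (0:ℝ) 1)
    (x : ℝ) : quantile ρ u ≤ x ↔ u ≤ ρ.real (Iic x) := by
  have hmono : Monotone fun x => ρ.real (Iic x) := fun a b hab =>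
    measureReal_mono (Iic_subset_Iic.2 hab)
  simp only [quantile, if_pos hu]
  have hbdd : BddBelow {x | u ≤ ρ.real (Iic x)} := by
    obtain ⟨a, ha⟩ := ((ProbabilityTheory.tendsto_cdf_atBot ρ).eventually
      (gt_mem_nhds hu.1)).exists
    rw [ProbabilityTheory.cdf_eq_real] at ha
    refine ⟨a, fun x hx => ?_⟩
    by_contra! h
    exact absurd ((show u ≤ ρ.real (Iic x) from hx).trans (hmono h.le)) (not_le.2 ha)
  have hne : {x | u ≤ ρ.real (Iic x)}.Nonempty := by
    obtain ⟨a, ha⟩ := ((ProbabilityTheory.tendsto_cdf_atTop ρ).eventually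
      (lt_mem_nhds hu.2)).exists
    rw [ProbabilityTheory.cdf_eq_real] at ha
    exact ⟨a, ha.le⟩
  refine ⟨fun h => le_trans ?_ (hmono h), fun h => csInf_le hbdd h⟩
  -- the infimum is attained because the distribution function is right-continuous
  set q := sInf {x | u ≤ ρ.real (Iic x)} with hq
  have hrc := (ProbabilityTheory.cdf ρ).right_continuous q
  have hrc' : Filter.Tendsto (ProbabilityTheory.cdf ρ) (nhdsWithin q (Ioi q))
      (nhds (ProbabilityTheory.cdf ρ q)) :=
    hrc.mono_left (nhdsWithin_mono q Ioi_subset_Ici_self)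
  have := ge_of_tendsto (b := u) hrc' (by
    filter_upwards [self_mem_nhdsWithin] with y hy
    obtain ⟨z, hz, hzy⟩ := exists_lt_of_csInf_lt hne (show q < y from hy)
    rw [ProbabilityTheory.cdf_eq_real]
    exact (show u ≤ ρ.real (Iic z) from hz).trans (hmono hzy.le))
  rwa [ProbabilityTheory.cdf_eq_real] at this

lemma measurable_quantile (ρ : Measure ℝ) [IsProbabilityMeasure ρ] : Measurable (quantile ρ) := by
  refine measurable_of_Iic fun x => ?_
  have h : quantile ρ ⁻¹' Iic x
      = (Ioo 0 1 ∩ Iic (ρ.real (Iic x))) ∪ ((Ioo (0:ℝ) 1)ᶜ ∩ {_u | (0:ℝ) ≤ x}) := by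
    ext u
    by_cases hu : u ∈ Ioo (0:ℝ) 1
    · simp only [mem_preimage, mem_Iic, quantile_le_iff ρ hu, mem_union, mem_inter_iff, hu,
        mem_compl_iff, true_and, not_true, false_and, or_false]
    · simp only [mem_preimage, mem_Iic, mem_union, mem_inter_iff, hu, quantile, if_false,
        mem_compl_iff, false_and, not_false_iff, true_and, false_or, mem_ofPred_eq]
  rw [h]
  exact (measurableSet_Ioo.inter measurableSet_Iic).union
    (measurableSet_Ioo.compl.inter (MeasurableSet.const _))

/-- The mass strictly below a quantile is at most the level. -/
lemma measure_Iio_quantile_le (ρ : Measure ℝ) [IsProbabilityMeasure ρ] {u : ℝ}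
    (hu : u ∈ Ioo (0:ℝ) 1) : ρ.real (Iio (quantile ρ u)) ≤ u := by
  have hlt : ∀ x < quantile ρ u, ρ.real (Iic x) ≤ u := fun x hx => by
    by_contra! h
    exact absurd ((quantile_le_iff ρ hu x).2 h.le) (not_le.2 hx)
  have h1 : ρ (Iio (quantile ρ u)) ≤ ENNReal.ofReal u := by
    rw [← ProbabilityTheory.measure_cdf ρ,
      StieltjesFunction.measure_Iio _ (ProbabilityTheory.tendsto_cdf_atBot ρ), sub_zero]
    refine ENNReal.ofReal_le_ofReal ?_
    rw [ProbabilityTheory.measure_cdf ρ]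
    refine le_of_tendsto ((ProbabilityTheory.monotone_cdf ρ).tendsto_leftLim _) ?_
    filter_upwards [self_mem_nhdsWithin] with y hy
    rw [ProbabilityTheory.cdf_eq_real]
    exact hlt y hy
  exact ENNReal.toReal_le_of_le_ofReal hu.1.le h1

/-- Converse half: push the measure of the copula forward by the quantile functions. -/
lemma sklar_converse {d : ℕ} (hd : 0 < d) {C : (Fin d → ℝ) → ℝ} (hC : IsCopula d C)
    (μs : Fin d → Measure ℝ) (hμs : ∀ i, IsProbabilityMeasure (μs i)) :
    ∃ μ : Measure (Fin d → ℝ), IsProbabilityMeasure μ ∧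
      (∀ x : Fin d → ℝ, μ.real {y | ∀ i, y i ≤ x i} = C (fun i => (μs i).real (Iic (x i)))) ∧
      (∀ i : Fin d, ∀ t : ℝ, μ.real {y | y i ≤ t} = (μs i).real (Iic t)) := by
  obtain ⟨ν, hνp, hν⟩ := hC.exists_measure hd
  have hmarg : ∀ (i : Fin d) {t : ℝ}, t ∈ Icc (0:ℝ) 1 → ν.real {y | y i ≤ t} = t :=
    fun i _ ht => hC.measure_margin hν i ht
  have hms : ∀ (i : Fin d) (t : ℝ), MeasurableSet {y : Fin d → ℝ | y i ≤ t} :=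
    fun i t => measurableSet_le (measurable_pi_apply i) measurable_const
  have hae : ∀ᵐ y ∂ν, ∀ i, y i ∈ Ioo (0:ℝ) 1 := by
    refine ae_all_iff.2 fun i => ?_
    have h0 : ∀ᵐ y ∂ν, ¬ y i ≤ 0 := by
      have := hmarg i (t := 0) (by simp)
      rw [measureReal_eq_zero_iff] at this
      rw [ae_iff]
      simpa using this
    have h1 : ∀ᵐ y ∂ν, y i < 1 := by
      have hle : ν.real {y | y i < 1} = 1 := by
        refine le_antisymm measureReal_le_one (le_of_forall_lt fun t ht => ?_)
        set s := max 0 ((t + 1) / 2) with hs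
        have hs1 : s < 1 := max_lt one_pos (by linarith)
        have hts : t < s := lt_of_lt_of_le (by linarith) (le_max_right _ _)
        refine hts.trans_le ?_
        rw [← hmarg i (t := s) ⟨le_max_left _ _, hs1.le⟩]
        exact measureReal_mono fun y hy => lt_of_le_of_lt (show y i ≤ s from hy) hs1
      have hm1 : MeasurableSet {y : Fin d → ℝ | y i < 1} :=
        measurableSet_lt (measurable_pi_apply i) measurable_const
      rw [measureReal_def, ENNReal.toReal_eq_one_iff, ← prob_compl_eq_zero_iff hm1] at hle
      exact hle
    filter_upwards [h0, h1] with y hy0 hy1 using ⟨not_le.1 hy0, hy1⟩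
  set Q : (Fin d → ℝ) → (Fin d → ℝ) := fun y i => quantile (μs i) (y i) with hQ
  have hQm : Measurable Q :=
    measurable_pi_lambda _ fun i => (measurable_quantile (μs i)).comp (measurable_pi_apply i)
  have h01 : ∀ i t, (μs i).real (Iic t) ∈ Icc (0:ℝ) 1 :=
    fun i t => ⟨measureReal_nonneg, measureReal_le_one⟩
  refine ⟨ν.map Q, Measure.isProbabilityMeasure_map hQm.aemeasurable, fun x => ?_, fun i t => ?_⟩
  · have hmx : MeasurableSet {y : Fin d → ℝ | ∀ i, y i ≤ x i} := measurableSet_Iic (a := x)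
    rw [map_measureReal_apply hQm hmx, ← hν _ fun i => h01 i (x i)]
    refine measureReal_congr (Filter.eventuallyEq_set.2 ?_)
    filter_upwards [hae] with y hy
    exact forall_congr' fun i => quantile_le_iff (μs i) (hy i) (x i)
  · rw [map_measureReal_apply hQm (hms i t)]
    refine Eq.trans ?_ (hmarg i (h01 i t))
    refine measureReal_congr (Filter.eventuallyEq_set.2 ?_)
    filter_upwards [hae] with y hy
    exact quantile_le_iff (μs i) (hy i) t

/-! ### The distributional transform -/

/-- Random vectors with uniform margins have a copula as joint distribution function. -/
lemma isCopula_of_uniform {d : ℕ} {Ω : Type*} [MeasurableSpace Ω] (P : Measure Ω)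
    [IsProbabilityMeasure P] (U : Fin d → Ω → ℝ) (hU : ∀ i, Measurable (U i))
    (hunif : ∀ i, ∀ t ∈ Icc (0:ℝ) 1, P.real {ω | U i ω ≤ t} = t) :
    IsCopula d (fun u => P.real {ω | ∀ i, U i ω ≤ u i}) := by
  classical
  have hms : ∀ i t, MeasurableSet {ω | U i ω ≤ t} := fun i t =>
    measurableSet_le (hU i) measurable_const
  have hmsall : ∀ u : Fin d → ℝ, MeasurableSet {ω | ∀ i, U i ω ≤ u i} := fun u => by
    have : {ω | ∀ i, U i ω ≤ u i} = ⋂ i, {ω | U i ω ≤ u i} := by ext; simp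
    rw [this]
    exact MeasurableSet.iInter fun i => hms i _
  refine ⟨fun u hu ⟨i, hi⟩ => ?_, fun a b ha hb hab => ?_, fun i t ht => ?_⟩
  · refine le_antisymm ?_ measureReal_nonneg
    have hsub : {ω | ∀ i, U i ω ≤ u i} ⊆ {ω | U i ω ≤ 0} := fun ω hω => (hω i).trans_eq hi
    exact (measureReal_mono hsub).trans_eq (hunif i 0 (by simp))
  · set f : Fin d → ℝ → Ω → ℝ := fun i t ω => if U i ω ≤ t then 1 else 0 with hf
    have hprod : ∀ u : Fin d → ℝ, (fun ω => ∏ i, f i (u i) ω)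
        = {ω | ∀ i, U i ω ≤ u i}.indicator 1 := by
      intro u
      ext ω
      simp only [hf, indicator, mem_ofPred_eq, Pi.one_apply]
      rw [Finset.prod_ite_zero]
      simp
    have hint : ∀ u : Fin d → ℝ, Integrable (fun ω => ∏ i, f i (u i) ω) P := fun u => by
      rw [hprod]
      exact (integrable_const (1:ℝ)).indicator (hmsall u)
    have hval : ∀ u : Fin d → ℝ,
        P.real {ω | ∀ i, U i ω ≤ u i} = ∫ ω, ∏ i, f i (u i) ω ∂P := fun u => by
      rw [hprod, integral_indicator_one (hmsall u)]
    simp only [hval, ← integral_const_mul]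
    rw [← integral_finsetSum _ fun s _ => (hint _).const_mul _]
    refine integral_nonneg fun ω => ?_
    have hexp := prod_sub_expand (fun i => f i (b i) ω) (fun i => f i (a i) ω)
    have heq : ∀ s : Finset (Fin d), ∏ i, f i (if i ∈ s then b i else a i) ω
        = ∏ i, (if i ∈ s then f i (b i) ω else f i (a i) ω) := fun s =>
      Finset.prod_congr rfl fun i _ => by split_ifs <;> rfl
    simp only [heq]
    rw [← hexp]
    refine Finset.prod_nonneg fun i _ => sub_nonneg.2 ?_
    simp only [hf]
    split_ifs with h1 h2
    · exact le_rfl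
    · exact absurd (h1.trans (hab i)) h2
    · exact zero_le_one
    · exact le_rfl
  · have hone : ∀ᵐ ω ∂P, ∀ l, U l ω ≤ 1 := by
      refine ae_all_iff.2 fun l => ?_
      have := hunif l 1 (by simp)
      rw [measureReal_def, ENNReal.toReal_eq_one_iff, ← prob_compl_eq_zero_iff (hms l 1)] at this
      exact this
    refine Eq.trans ?_ (hunif i t ht)
    refine measureReal_congr (Filter.eventuallyEq_set.2 ?_)
    filter_upwards [hone] with ω hω
    refine ⟨fun h => by simpa using h i, fun h l => ?_⟩
    split_ifs with hl
    · exact hl ▸ h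
    · exact hω l

/-- The distributional transform `F(x-) + v (F(x) - F(x-))` of a law `ρ` on `ℝ`, where `F` is the
distribution function of `ρ`. The extra randomisation `v` spreads each atom of `ρ` uniformly. -/
noncomputable def distTransform (ρ : Measure ℝ) (p : ℝ × ℝ) : ℝ :=
  ρ.real (Iio p.1) + p.2 * (ρ.real (Iic p.1) - ρ.real (Iio p.1))

/-- The uniform law on `[0, 1]`. -/
noncomputable def unif : Measure ℝ := volume.restrict (Icc 0 1)

lemma unif_univ : unif univ = 1 := by simp [unif]

instance instIsProbabilityMeasureUnif : IsProbabilityMeasure unif := ⟨unif_univ⟩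

lemma unif_ae : ∀ᵐ v ∂unif, v ∈ Icc (0:ℝ) 1 := ae_restrict_mem measurableSet_Icc

lemma unif_Iic {t : ℝ} (ht : t ∈ Icc (0:ℝ) 1) : unif.real (Iic t) = t := by
  have h : Iic t ∩ Icc 0 1 = Icc 0 t := by
    ext v
    simp only [mem_inter_iff, mem_Iic, mem_Icc]
    exact ⟨fun h => ⟨h.2.1, h.1⟩, fun h => ⟨h.2, h.1, h.2.trans ht.2⟩⟩
  rw [measureReal_def, unif, Measure.restrict_apply measurableSet_Iic, h, Real.volume_Icc,
    sub_zero, ENNReal.toReal_ofReal ht.1]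

lemma measurable_distTransform (ρ : Measure ℝ) [IsProbabilityMeasure ρ] :
    Measurable (distTransform ρ) := by
  have h1 : Measurable fun x => ρ.real (Iio x) :=
    Monotone.measurable fun a b hab => measureReal_mono (Iio_subset_Iio hab)
  have h2 : Measurable fun x => ρ.real (Iic x) :=
    Monotone.measurable fun a b hab => measureReal_mono (Iic_subset_Iic.2 hab)
  unfold distTransform
  exact (h1.comp measurable_fst).add
    (measurable_snd.mul ((h2.comp measurable_fst).sub (h1.comp measurable_fst)))

lemma distTransform_le (ρ : Measure ℝ) [IsProbabilityMeasure ρ] {x v : ℝ} (hv : v ≤ 1) :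
    distTransform ρ (x, v) ≤ ρ.real (Iic x) := by
  have : ρ.real (Iio x) ≤ ρ.real (Iic x) := measureReal_mono Iio_subset_Iic_self
  simp only [distTransform]
  nlinarith

lemma le_distTransform (ρ : Measure ℝ) [IsProbabilityMeasure ρ] {x v : ℝ} (hv : 0 ≤ v) :
    ρ.real (Iio x) ≤ distTransform ρ (x, v) := by
  have : ρ.real (Iio x) ≤ ρ.real (Iic x) := measureReal_mono Iio_subset_Iic_self
  simp only [distTransform]
  nlinarith

/-- At each level `u`, a set of mass `u` lies, up to null sets, between `{T < u}` and `{T ≤ u}`: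
everything strictly below the `u`-quantile `q`, together with the fraction of the atom at `q`
needed to reach mass `u`. -/
lemma exists_level_set (ρ : Measure ℝ) [IsProbabilityMeasure ρ] {u : ℝ} (hu : u ∈ Ioo (0:ℝ) 1) :
    ∃ S : Set (ℝ × ℝ), (ρ.prod unif).real S = u ∧
      (∀ᵐ p ∂(ρ.prod unif), p ∈ S → distTransform ρ p ≤ u) ∧
      (∀ᵐ p ∂(ρ.prod unif), distTransform ρ p < u → p ∈ S) := by
  set q := quantile ρ u with hq
  have h1 : ρ.real (Iio q) ≤ u := measure_Iio_quantile_le ρ hu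
  have h2 : u ≤ ρ.real (Iic q) := (quantile_le_iff ρ hu q).1 le_rfl
  have hatom : ρ.real (Iic q) = ρ.real (Iio q) + ρ.real {q} := by
    rw [← Iio_union_right, measureReal_union (by simp) (measurableSet_singleton q)]
  set A := ρ.real {q} with hA
  have hA0 : 0 ≤ A := measureReal_nonneg
  set θ := (u - ρ.real (Iio q)) / A with hθ
  have hθ01 : θ ∈ Icc (0:ℝ) 1 :=
    ⟨div_nonneg (by linarith) hA0, div_le_one_of_le₀ (by linarith) hA0⟩
  have hθA : A * θ = u - ρ.real (Iio q) := by
    rcases hA0.eq_or_lt with h | h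
    · rw [← h, zero_mul]
      linarith
    · rw [hθ]
      field_simp
  have hv : ∀ᵐ p ∂(ρ.prod unif), p.2 ∈ Icc (0:ℝ) 1 :=
    Measure.quasiMeasurePreserving_snd.ae unif_ae
  -- if `q` is no atom, then the fibre over `q` is null
  have hq0 : A = 0 → ∀ᵐ p ∂(ρ.prod unif), p.1 ≠ q := fun h => by
    refine Measure.quasiMeasurePreserving_fst.ae (p := fun x => x ≠ q) ?_
    rw [ae_iff]
    simpa [hA, measureReal_eq_zero_iff] using h
  refine ⟨(Iio q ×ˢ univ) ∪ ({q} ×ˢ Iic θ), ?_, ?_, ?_⟩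
  · rw [measureReal_union _ ((measurableSet_singleton q).prod measurableSet_Iic),
      measureReal_prod_prod, measureReal_prod_prod, unif_Iic hθ01, probReal_univ, mul_one, hθA]
    · ring
    · refine Set.disjoint_left.2 ?_
      rintro ⟨x, v⟩ ⟨hx, -⟩ ⟨hx', -⟩
      exact absurd (show x = q from hx') (ne_of_lt hx)
  · filter_upwards [hv] with p hp hpS
    obtain ⟨x, v⟩ := p
    rcases hpS with ⟨hx, -⟩ | ⟨hx, hvθ⟩
    · refine (distTransform_le ρ hp.2).trans (le_trans ?_ h1)
      exact measureReal_mono (Iic_subset_Iio.2 hx)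
    · obtain rfl : x = q := hx
      simp only [distTransform, hatom]
      have hvθ' : v ≤ θ := hvθ
      nlinarith
  · have key : ∀ᵐ p ∂(ρ.prod unif), A = 0 → p.1 ≠ q := by
      by_cases h : A = 0
      · filter_upwards [hq0 h] with p hp _ using hp
      · exact Filter.Eventually.of_forall fun p h' => absurd h' h
    filter_upwards [hv, key] with p hp hpq hlt
    obtain ⟨x, v⟩ := p
    rcases lt_trichotomy x q with hx | hx | hx
    · exact Or.inl ⟨hx, mem_univ _⟩
    · refine Or.inr ⟨hx, ?_⟩
      have hApos : 0 < A := lt_of_le_of_ne hA0 fun h => hpq h.symm hx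
      obtain rfl : x = q := hx
      simp only [distTransform, hatom] at hlt
      show v ≤ θ
      rw [hθ, le_div_iff₀ hApos]
      linarith
    · exfalso
      have h3 : ρ.real (Iic q) ≤ ρ.real (Iio x) := measureReal_mono (Iic_subset_Iio.2 hx)
      have h4 := le_distTransform ρ (x := x) hp.1
      linarith

lemma distTransform_uniform (ρ : Measure ℝ) [IsProbabilityMeasure ρ] {u : ℝ}
    (hu : u ∈ Icc (0:ℝ) 1) : (ρ.prod unif).real {p | distTransform ρ p ≤ u} = u := by
  have hlow : ∀ t ∈ Ioo (0:ℝ) 1, t ≤ (ρ.prod unif).real {p | distTransform ρ p ≤ t} := by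
    intro t ht
    obtain ⟨S, hS, hS1, -⟩ := exists_level_set ρ ht
    calc t = (ρ.prod unif).real S := hS.symm
      _ ≤ _ := ENNReal.toReal_mono (measure_ne_top _ _) (measure_mono_ae hS1)
  have hupp : ∀ t ∈ Ioo (0:ℝ) 1, (ρ.prod unif).real {p | distTransform ρ p < t} ≤ t := by
    intro t ht
    obtain ⟨S, hS, -, hS2⟩ := exists_level_set ρ ht
    calc _ ≤ (ρ.prod unif).real S :=
          ENNReal.toReal_mono (measure_ne_top _ _) (measure_mono_ae hS2)
      _ = t := hS
  refine le_antisymm ?_ ?_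
  · rcases hu.2.eq_or_lt with h | h
    · rw [h]
      exact measureReal_le_one
    · refine le_of_forall_gt_imp_ge_of_dense fun t ht => ?_
      rcases lt_or_ge t 1 with h1 | h1
      · exact (measureReal_mono fun p hp =>
          lt_of_le_of_lt (show distTransform ρ p ≤ u from hp) ht).trans
          (hupp t ⟨hu.1.trans_lt ht, h1⟩)
      · exact measureReal_le_one.trans h1
  · rcases hu.1.eq_or_lt with h | h
    · rw [← h]
      exact measureReal_nonneg
    · refine le_of_forall_lt_imp_le_of_dense fun t ht => ?_
      rcases lt_or_ge 0 t with h0 | h0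
      · exact (hlow t ⟨h0, ht.trans_le hu.2⟩).trans (measureReal_mono fun p hp =>
          (show distTransform ρ p ≤ t from hp).trans ht.le)
      · exact h0.trans measureReal_nonneg

/-- Direct half: the joint distribution function of the distributional transforms of the
coordinates, all randomised by the same independent uniform variable, is a suitable copula. -/
lemma sklar_direct {d : ℕ} (μ : Measure (Fin d → ℝ)) [IsProbabilityMeasure μ] :
    ∃ C : (Fin d → ℝ) → ℝ, IsCopula d C ∧
      ∀ x : Fin d → ℝ, μ.real {y | ∀ i, y i ≤ x i} = C (fun i => μ.real {y | y i ≤ x i}) := by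
  set P : Measure ((Fin d → ℝ) × ℝ) := μ.prod unif with hP
  set ρ : Fin d → Measure ℝ := fun i => μ.map (fun y => y i) with hρ
  have hρp : ∀ i, IsProbabilityMeasure (ρ i) := fun i =>
    Measure.isProbabilityMeasure_map (measurable_pi_apply i).aemeasurable
  have hρF : ∀ i t, (ρ i).real (Iic t) = μ.real {y | y i ≤ t} := fun i t =>
    map_measureReal_apply (measurable_pi_apply i) measurableSet_Iic
  have hproj : ∀ i : Fin d, Measurable fun ω : (Fin d → ℝ) × ℝ => (ω.1 i, ω.2) := fun i => by
    fun_prop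
  have hPmap : ∀ i, P.map (fun ω => (ω.1 i, ω.2)) = (ρ i).prod unif := fun i => by
    have := Measure.map_prod_map μ unif (measurable_pi_apply (X := fun _ : Fin d => ℝ) i)
      measurable_id
    rw [Measure.map_id] at this
    exact this.symm
  set U : Fin d → (Fin d → ℝ) × ℝ → ℝ := fun i ω => distTransform (ρ i) (ω.1 i, ω.2) with hU
  have hUm : ∀ i, Measurable (U i) := fun i => (measurable_distTransform (ρ i)).comp (hproj i)
  have hunif : ∀ i, ∀ t ∈ Icc (0:ℝ) 1, P.real {ω | U i ω ≤ t} = t := fun i t ht => by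
    have h := distTransform_uniform (ρ i) ht
    rw [← hPmap i, map_measureReal_apply (hproj i)
      (measurableSet_le (measurable_distTransform (ρ i)) measurable_const)] at h
    exact h
  have hfst : ∀ s : Set (Fin d → ℝ), P.real (Prod.fst ⁻¹' s) = μ.real s := fun s => by
    rw [← prod_univ, measureReal_prod_prod, probReal_univ, mul_one]
  have hv : ∀ᵐ ω ∂P, ω.2 ∈ Icc (0:ℝ) 1 := Measure.quasiMeasurePreserving_snd.ae unif_ae
  refine ⟨_, isCopula_of_uniform P U hUm hunif, fun x => ?_⟩
  -- `{X i ≤ x i} ⊆ {U i ≤ F i (x i)}` up to a null set, and both have mass `F i (x i)`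
  have hae : ∀ i, ∀ᵐ ω ∂P, (ω.1 i ≤ x i ↔ U i ω ≤ μ.real {y | y i ≤ x i}) := fun i => by
    refine Filter.eventuallyEq_set.1 (ae_eq_of_ae_subset_of_measure_ge
      (s := {ω : (Fin d → ℝ) × ℝ | ω.1 i ≤ x i})
      (t := {ω : (Fin d → ℝ) × ℝ | U i ω ≤ μ.real {y | y i ≤ x i}}) ?_ ?_ ?_ (measure_ne_top _ _))
    · filter_upwards [hv] with ω hω hx
      refine (distTransform_le (ρ i) hω.2).trans ?_
      rw [← hρF]
      exact measureReal_mono (Iic_subset_Iic.2 hx)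
    · refine le_of_eq ((measureReal_eq_measureReal_iff).1 ?_)
      rw [hunif i _ ⟨measureReal_nonneg, measureReal_le_one⟩]
      exact (hfst {y | y i ≤ x i}).symm
    · exact (measurableSet_le ((measurable_pi_apply i).comp measurable_fst)
        measurable_const).nullMeasurableSet
  rw [← hfst]
  refine measureReal_congr (Filter.eventuallyEq_set.2 ?_)
  filter_upwards [ae_all_iff.2 hae] with ω hω
  exact forall_congr' hω

/-- Sklar's theorem: every joint distribution function of a probability
measure on `ℝ^d` factors through a `d`-copula applied to its marginal distribution
functions, and conversely every `d`-copula composed with one-dimensional distribution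
functions is the joint distribution function of a probability measure on `ℝ^d` with the
prescribed margins. -/
theorem sklar (d : ℕ) (hd : 2 ≤ d) :
    (∀ μ : MeasureTheory.Measure (Fin d → ℝ), IsProbabilityMeasure μ →
      ∃ C : (Fin d → ℝ) → ℝ, IsCopula d C ∧
        ∀ x : Fin d → ℝ,
          (μ {y | ∀ i, y i ≤ x i}).toReal
            = C (fun i => (μ {y | y i ≤ x i}).toReal)) ∧
    (∀ C : (Fin d → ℝ) → ℝ, IsCopula d C →
      ∀ μs : Fin d → MeasureTheory.Measure ℝ, (∀ i, IsProbabilityMeasure (μs i)) →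
        ∃ μ : MeasureTheory.Measure (Fin d → ℝ), IsProbabilityMeasure μ ∧
          (∀ x : Fin d → ℝ,
            (μ {y | ∀ i, y i ≤ x i}).toReal
              = C (fun i => (μs i (Iic (x i))).toReal)) ∧
          (∀ i : Fin d, ∀ t : ℝ, (μ {y | y i ≤ t}).toReal = (μs i (Iic t)).toReal)) := by
  have hd0 : 0 < d := by omega
  exact ⟨fun μ _ => sklar_direct μ, fun C hC μs hμs => sklar_converse hd0 hC μs hμs⟩
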